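/- There exists a class of languages learnable by a dual monotone behaviorally correct full-information learner from informants but not by any monotone one: [Inf G Mon^d Bc] \ [Inf G Mon Bc] ≠ ∅; in fact the class consisting of X = 2ℕ (the even numbers), all Y_n = {2n+1} ∪ {2i | i ≤ n}, and all Z_{n,m} = Y_n ∪ {2m} for n < m witnesses this separation. -/

import Mathlib

open Filter Classical

namespace InfBc

/-! ### Basic notions: r.e. sets, informants, learners -/

/-- The `e`-th recursively enumerable set (via an acceptable numbering of
partial computable functions, `W e = dom φ_e`). -/
def W (e : ℕ) : Set ℕ := {x | ((Denumerable.ofNat Nat.Partrec.Code e).eval x).Dom}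

/-- A language is recursively enumerable. -/
def RE (L : Set ℕ) : Prop := ∃ e, W e = L

abbrev Datum := ℕ × Bool
abbrev Seq := List Datum
abbrev Informant := ℕ → Datum
abbrev HypSeq := ℕ → Part ℕ
/-- Learners are partial functions; all input types are coded into `ℕ`. -/
abbrev Learner := ℕ →. ℕ
abbrev Restriction := HypSeq → Informant → Prop

/-- Positive information of an infinite sequence. -/
def posI (I : Informant) : Set ℕ := {x | ∃ n, I n = (x, true)}
/-- Negative information of an infinite sequence. -/
def negI (I : Informant) : Set ℕ := {x | ∃ n, I n = (x, false)}

/-- `I` is an informant for the language `L`. -/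
def IsInformant (I : Informant) (L : Set ℕ) : Prop := posI I = L ∧ negI I = Lᶜ

/-- `I` is an informant (for some language), i.e. `I ∈ Inf`. -/
def IsInf (I : Informant) : Prop := IsInformant I (posI I)

/-- `I` is a canonical informant. -/
def Canonical (I : Informant) : Prop := ∀ x, I x = (x, true) ∨ I x = (x, false)

/-- `I[n]`, the length-`n` initial segment of `I`. -/
def segment (I : Informant) (n : ℕ) : Seq := (List.range n).map I

/-- Positive information of a finite sequence. -/
def posS (σ : Seq) : Set ℕ := {x | (x, true) ∈ σ}
/-- Negative information of a finite sequence. -/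
def negS (σ : Seq) : Set ℕ := {x | (x, false) ∈ σ}
/-- The content of a finite sequence, as a set. -/
def contentS (σ : Seq) : Set Datum := {a | a ∈ σ}

/-! ### Interaction operators -/

abbrev InteractionOperator := Learner → Informant → HypSeq

/-- Full-information (Gold-style) interaction: `G(h,I)(i) = h(I[i])`. -/
def Gop : InteractionOperator := fun h I i => h (Encodable.encode (segment I i))

/-- Set-driven interaction: `Sd(h,I)(i) = h(content(I[i]))`. -/
def Sdop : InteractionOperator := fun h I i => h (Encodable.encode (segment I i).toFinset)

/-- The iterated evaluation of an iterative learner on a finite sequence: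
start with the initial hypothesis `h(none)` and feed the data one by one. -/
def iterExtend (h : Learner) (σ : Seq) : Part ℕ :=
  σ.foldl (fun pe a => pe.bind fun e => h (Encodable.encode (some (e, a))))
    (h (Encodable.encode (none : Option (ℕ × Datum))))

/-- Iterative interaction: `It(h,I)(i)` is obtained by feeding `I[i]` one datum
at a time, each time updating the previous hypothesis. -/
def Itop : InteractionOperator := fun h I i => iterExtend h (segment I i)

/-- An iterative learner is confluent if the order and multiplicity in which
the content is presented does not matter. -/
def ConfluentLearner (h : Learner) : Prop :=
  ∀ σ τ : Seq, contentS σ = contentS τ → iterExtend h σ = iterExtend h τ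

/-- Confluently iterative interaction. -/
noncomputable def CflItop : InteractionOperator := fun h I i =>
  if ConfluentLearner h then iterExtend h (segment I i) else Part.none

/-- `β ≼ β'`: every (partial computable) `β`-learner can be translated into a
`β'`-learner with the same hypothesis sequence on every informant. -/
def OpLe (β β' : InteractionOperator) : Prop :=
  ∀ h : Learner, Partrec h → ∃ h' : Learner, Partrec h' ∧
    ∀ I : Informant, IsInf I → ∀ n, β h I n = β' h' I n

/-! ### Learning restrictions -/

/-- The trivial restriction `T`. -/
def TT : Restriction := fun _ _ => True

/-- Explanatory identification. -/
def Ex : Restriction := fun p I =>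
  ∃ q, W q = posI I ∧ ∀ᶠ n in atTop, p n = Part.some q

/-- Behaviorally correct identification. -/
def Bc : Restriction := fun p I => ∀ᶠ n in atTop, ∃ e ∈ p n, W e = posI I

/-- Consistency of a hypothesis with a finite sequence of data. -/
def ConsH (e : ℕ) (σ : Seq) : Prop := posS σ ⊆ W e ∧ negS σ ∩ W e = ∅

/-- Consistency of a hypothesis sequence with an informant. -/
def Cons : Restriction := fun p I => ∀ n, ∃ e ∈ p n, ConsH e (segment I n)

/-- Strongly monotone. -/
def SMon : Restriction := fun p _ =>
  ∀ s t, s ≤ t → ∀ e ∈ p s, ∀ e' ∈ p t, W e ⊆ W e'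

/-- Dual strongly monotone. -/
def SMond : Restriction := fun p _ =>
  ∀ s t, s ≤ t → ∀ e ∈ p s, ∀ e' ∈ p t, W e' ⊆ W e

/-- Monotone. -/
def Mon : Restriction := fun p I =>
  ∀ s t, s ≤ t → ∀ e ∈ p s, ∀ e' ∈ p t, W e ∩ posI I ⊆ W e' ∩ posI I

/-- Dual monotone. -/
def Mond : Restriction := fun p I =>
  ∀ s t, s ≤ t → ∀ e ∈ p s, ∀ e' ∈ p t, (W e)ᶜ ∩ negI I ⊆ (W e')ᶜ ∩ negI I

/-- Weakly monotone. -/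
def WMon : Restriction := fun p I =>
  ∀ s t, s ≤ t → ∀ e ∈ p s, ConsH e (segment I t) → ∀ e' ∈ p t, W e ⊆ W e'

/-- Dual weakly monotone. -/
def WMond : Restriction := fun p I =>
  ∀ s t, s ≤ t → ∀ e ∈ p s, ConsH e (segment I t) → ∀ e' ∈ p t, W e' ⊆ W e

/-- Cautious. -/
def Caut : Restriction := fun p _ =>
  ∀ s t, s < t → ∀ e ∈ p s, ∀ e' ∈ p t, ¬ W e' ⊂ W e

/-- Target cautious. -/
def CautTar : Restriction := fun p I =>
  ∀ s, ∀ e ∈ p s, ¬ posI I ⊂ W e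

/-- Finitely cautious. -/
def CautFin : Restriction := fun p _ =>
  ∀ s t, s < t → ∀ e ∈ p s, ∀ e' ∈ p t, W e' ⊂ W e → (W e').Infinite

/-- Infinitely cautious. -/
def CautInf : Restriction := fun p _ =>
  ∀ s t, s < t → ∀ e ∈ p s, ∀ e' ∈ p t, W e' ⊂ W e → (W e').Finite

/-! ### Learnability -/

/-- The class of admissible learners: all partial computable learners. -/
def AllL : Learner → Prop := fun _ => True
/-- The class of admissible learners: total computable learners (`ℛ`). -/
def TotalL : Learner → Prop := fun h => ∀ x, (h x).Dom
/-- Admissible informants: all informants (`Inf`). -/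
def AllI : Informant → Prop := fun _ => True

/-- `h` learns `L` in the setting given by admissible informants `P`,
interaction operator `β` and local restriction `δ`. -/
def LearnsWith (P : Informant → Prop) (β : InteractionOperator) (δ : Restriction)
    (h : Learner) (L : Set ℕ) : Prop :=
  RE L ∧ ∀ I : Informant, P I → IsInformant I L → δ (β h I) I

/-- `[τ(α) C P β δ]`: the collection of all classes of languages learnable by
some learner in `C` that satisfies the global restriction `α` on all admissible
informants, under interaction operator `β` and local restriction `δ`. -/
def Learnable (α : Restriction) (C : Learner → Prop) (P : Informant → Prop)
    (β : InteractionOperator) (δ : Restriction) : Set (Set (Set ℕ)) :=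
  {𝓛 | ∃ h : Learner, Partrec h ∧ C h ∧
        (∀ I : Informant, IsInf I → P I → α (β h I) I) ∧
        ∀ L ∈ 𝓛, LearnsWith P β δ h L}

/-! ### Properties of restrictions -/

/-- A learning restriction is delayable if it is preserved under postponing
hypotheses along a non-decreasing unbounded function. -/
def Delayable (δ : Restriction) : Prop :=
  ∀ I I' : Informant, IsInf I → IsInf I' → Set.range I = Set.range I' →
    ∀ (p : HypSeq) (s : ℕ → ℕ), Monotone s → (∀ m, ∃ n, m ≤ s n) →
      δ p I → (∀ n, contentS (segment I (s n)) ⊆ contentS (segment I' n)) →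
      δ (fun n => p (s n)) I'

/-- A learning restriction is semantic if it is indifferent to replacing the
hypothesis sequence by a semantically equivalent one. -/
def Semantic (δ : Restriction) : Prop :=
  ∀ (p p' : HypSeq) (I : Informant), δ p I →
    (∀ i, (p i).Dom ↔ (p' i).Dom) →
    (∀ i, ∀ e ∈ p i, ∀ e' ∈ p' i, W e = W e') →
    δ p' I


/-- `X = 2ℕ`, the even numbers. -/
def X12 : Set ℕ := {x | ∃ i, x = 2 * i}

/-- `Y_n = {2n+1} ∪ {2i | i ≤ n}`. -/
def Y12 (n : ℕ) : Set ℕ := insert (2 * n + 1) {x | ∃ i, i ≤ n ∧ x = 2 * i}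

/-- `Z_{n,m} = Y_n ∪ {2m}`. -/
def Z12 (n m : ℕ) : Set ℕ := insert (2 * m) (Y12 n)

/-- The witness class consisting of `X`, all `Y_n` and all `Z_{n,m}` (`n < m`). -/
def class12 : Set (Set ℕ) :=
  {X12} ∪ {S | ∃ n, S = Y12 n} ∪ {S | ∃ n m, n < m ∧ S = Z12 n m}

/-!
The learner conjectures everything it has seen positively together with all even numbers below
every odd number seen positively. The second part can only shrink, and the first never contains a
negative datum, so the learner is dual monotone.

Conversely, let a monotone learner conjecture `X` on the first `k` bits of `X`. These are also
the first `k` bits of `Y_k`, on which the learner conjectures `Y_k` after some `t ≥ k` bits, and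
these in turn are the first `t` bits of `Z_{k,m}` for large `m`. On `Z_{k,m}` the learner has
therefore given up the correct element `2m` of its earlier conjecture `X`.
-/

theorem LearnsWith.of_forall_imp {P P' : Informant → Prop} {β : InteractionOperator}
    {δ : Restriction} {h : Learner} {L : Set ℕ} (hP : ∀ I, P' I → P I)
    (hL : LearnsWith P β δ h L) : LearnsWith P' β δ h L :=
  ⟨hL.1, fun I hI => hL.2 I (hP I hI)⟩

theorem Learnable.mono_learners {α : Restriction} {C C' : Learner → Prop} {P : Informant → Prop}
    {β : InteractionOperator} {δ : Restriction} (hC : ∀ h, C h → C' h) :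
    Learnable α C P β δ ⊆ Learnable α C' P β δ :=
  fun _ ⟨h, hpart, hCh, hα, hlearn⟩ => ⟨h, hpart, hC h hCh, hα, hlearn⟩

/-! ### Finite data of an informant -/

section Informant

variable {I : Informant}

theorem mem_segment {n : ℕ} {a : Datum} : a ∈ segment I n ↔ ∃ k < n, I k = a := by
  simp [segment]

theorem segment_subset_segment (I : Informant) {s t : ℕ} (hst : s ≤ t) :
    segment I s ⊆ segment I t :=
  List.map_subset I (List.range_subset.2 hst)

theorem posS_mono {σ τ : Seq} (h : σ ⊆ τ) : posS σ ⊆ posS τ :=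
  fun _ hx => h hx

theorem posS_segment_subset_posI (I : Informant) (n : ℕ) : posS (segment I n) ⊆ posI I :=
  fun _ hx => let ⟨k, _, hk⟩ := mem_segment.1 hx; ⟨k, hk⟩

theorem eventually_subset_posS_segment {F : Set ℕ} (hF : F.Finite) (hFI : F ⊆ posI I) :
    ∀ᶠ n in atTop, F ⊆ posS (segment I n) := by
  refine (eventually_all_finite hF).2 fun x hx => ?_
  obtain ⟨k, hk⟩ := hFI hx
  filter_upwards [eventually_gt_atTop k] with n hn
  exact mem_segment.2 ⟨k, hn, hk⟩

theorem IsInformant.disjoint {L : Set ℕ} (hI : IsInformant I L) : Disjoint (posI I) (negI I) := by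
  rw [hI.1, hI.2]
  exact disjoint_compl_right

theorem RE.of_bc {p : HypSeq} (h : Bc p I) : RE (posI I) :=
  let ⟨_, e, _, he⟩ := h.exists
  ⟨e, he⟩

end Informant

/-- The informant listing the characteristic function of `L` in increasing order. Languages
that agree below `k` have canonical informants with the same first `k` data. -/
noncomputable def canonicalInformant (L : Set ℕ) : Informant := fun x => (x, decide (x ∈ L))

theorem canonical_canonicalInformant (L : Set ℕ) : Canonical (canonicalInformant L) := by
  intro x
  by_cases hx : x ∈ L <;> simp [canonicalInformant, hx]

theorem posI_canonicalInformant (L : Set ℕ) : posI (canonicalInformant L) = L := by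
  ext x
  simp [posI, canonicalInformant]

theorem isInformant_canonicalInformant (L : Set ℕ) : IsInformant (canonicalInformant L) L := by
  refine ⟨posI_canonicalInformant L, ?_⟩
  ext x
  simp [negI, canonicalInformant]

theorem segment_canonicalInformant_congr {L M : Set ℕ} {k : ℕ}
    (h : ∀ x < k, x ∈ L ↔ x ∈ M) :
    segment (canonicalInformant L) k = segment (canonicalInformant M) k :=
  List.map_congr_left fun x hx => by simp [canonicalInformant, h x (List.mem_range.1 hx)]

/-! ### Learners with prescribed conjectures -/

theorem exists_computable_W_eq {α : Type*} [Primcodable α] {S : α → Set ℕ}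
    (hS : REPred fun p : α × ℕ => p.2 ∈ S p.1) :
    ∃ f : α → ℕ, Computable f ∧ ∀ a, W (f a) = S a := by
  obtain ⟨c, hc⟩ := Nat.Partrec.Code.exists_code.1 hS
  refine ⟨fun a => Encodable.encode (c.curry (Encodable.encode a)), ?_, fun a => ?_⟩
  · exact (Primrec.encode.comp
      (Nat.Partrec.Code.primrec₂_curry.comp (Primrec.const c) Primrec.encode)).to_comp
  · ext x
    simp [W, Nat.Partrec.Code.eval_curry, hc, Part.assert]

/-- The total learner that conjectures `f σ` on the data sequence `σ`. Numbers coding no sequence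
are read as the empty sequence. -/
def totalLearner (f : Seq → ℕ) : Learner :=
  fun n => Part.some (f ((Encodable.decode n).getD []))

theorem partrec_totalLearner {f : Seq → ℕ} (hf : Computable f) : Partrec (totalLearner f) :=
  hf.comp (Primrec.option_getD.comp Primrec.decode (Primrec.const [])).to_comp

theorem totalL_totalLearner (f : Seq → ℕ) : TotalL (totalLearner f) :=
  fun _ => trivial

theorem Gop_totalLearner (f : Seq → ℕ) (I : Informant) (n : ℕ) :
    Gop (totalLearner f) I n = Part.some (f (segment I n)) := by
  simp [Gop, totalLearner]

section DualMonotone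

variable {f : Seq → ℕ} {K : Seq → Set ℕ}

theorem mond_totalLearner (hK : ∀ ⦃σ τ⦄, σ ⊆ τ → K τ ⊆ K σ)
    (hf : ∀ σ, W (f σ) = posS σ ∪ K σ) {I : Informant} (hI : Disjoint (posI I) (negI I)) :
    Mond (Gop (totalLearner f) I) I := by
  intro s t hst e he e' he' x ⟨hxe, hxneg⟩
  rw [Gop_totalLearner, Part.mem_some_iff] at he he'
  subst he he'
  rw [hf] at hxe ⊢
  refine ⟨?_, hxneg⟩
  rintro (hxpos | hxK)
  · exact hI.notMem_of_mem_right hxneg (posS_segment_subset_posI I t hxpos)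
  · exact hxe (Or.inr (hK (segment_subset_segment I hst) hxK))

theorem bc_totalLearner {I : Informant} (h : ∀ᶠ n in atTop, W (f (segment I n)) = posI I) :
    Bc (Gop (totalLearner f) I) I :=
  h.mono fun n hn => ⟨f (segment I n), by simp [Gop_totalLearner], hn⟩

theorem mem_learnable_mond_bc {𝓛 : Set (Set ℕ)}
    (hre : REPred fun p : Seq × ℕ => p.2 ∈ posS p.1 ∪ K p.1)
    (hK : ∀ ⦃σ τ⦄, σ ⊆ τ → K τ ⊆ K σ)
    (hlim : ∀ L ∈ 𝓛, ∀ I, IsInformant I L →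
      ∀ᶠ n in atTop, posS (segment I n) ∪ K (segment I n) = L) :
    𝓛 ∈ Learnable TT TotalL AllI Gop (fun p I => Mond p I ∧ Bc p I) := by
  obtain ⟨f, hcomp, hf⟩ := exists_computable_W_eq (S := fun σ => posS σ ∪ K σ) hre
  have hbc : ∀ L ∈ 𝓛, ∀ I, IsInformant I L → Bc (Gop (totalLearner f) I) I :=
    fun L hL I hI => bc_totalLearner <| by simpa only [hf, hI.1] using hlim L hL I hI
  refine ⟨totalLearner f, partrec_totalLearner hcomp, totalL_totalLearner f,
    fun _ _ _ => trivial, fun L hL => ⟨?_, fun I _ hI => ?_⟩⟩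
  · rw [← posI_canonicalInformant L]
    exact RE.of_bc (hbc L hL _ (isInformant_canonicalInformant L))
  · exact ⟨mond_totalLearner hK hf hI.disjoint, hbc L hL I hI⟩

end DualMonotone

/-! ### An obstruction to monotone learning -/

section Monotone

variable {h : Learner}

theorem LearnsWith.exists_ge_W_eq {β : InteractionOperator} {δ : Restriction} {L : Set ℕ}
    (hL : LearnsWith Canonical β (fun p I => δ p I ∧ Bc p I) h L) (N : ℕ) :
    ∃ n ≥ N, ∃ e ∈ β h (canonicalInformant L) n, W e = L := by
  have hbc := (hL.2 _ (canonical_canonicalInformant L) (isInformant_canonicalInformant L)).2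
  obtain ⟨n, ⟨e, he, hWe⟩, hn⟩ := (hbc.and (eventually_ge_atTop N)).exists
  exact ⟨n, hn, e, he, hWe.trans (posI_canonicalInformant L)⟩

theorem W_inter_subset_of_mon {L M N : Set ℕ} {s t : ℕ} (hst : s ≤ t)
    (hmon : Mon (Gop h (canonicalInformant N)) (canonicalInformant N))
    (hLN : ∀ x < s, x ∈ L ↔ x ∈ N) (hMN : ∀ x < t, x ∈ M ↔ x ∈ N) {e e' : ℕ}
    (he : e ∈ Gop h (canonicalInformant L) s) (he' : e' ∈ Gop h (canonicalInformant M) t) :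
    W e ∩ N ⊆ W e' := by
  rw [Gop, segment_canonicalInformant_congr hLN] at he
  rw [Gop, segment_canonicalInformant_congr hMN] at he'
  have hsub := hmon s t hst e he e' he'
  rw [posI_canonicalInformant] at hsub
  exact hsub.trans Set.inter_subset_left

theorem exists_not_learnsWith_mon_bc {𝓛 : Set (Set ℕ)} {L : Set ℕ} (hL : L ∈ 𝓛)
    (hsep : ∀ s, ∃ M ∈ 𝓛, ∀ t, ∃ N ∈ 𝓛, (∀ x < s, x ∈ L ↔ x ∈ N) ∧
      (∀ x < t, x ∈ M ↔ x ∈ N) ∧ ¬ L ∩ N ⊆ M) (h : Learner) :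
    ∃ L' ∈ 𝓛, ¬ LearnsWith Canonical Gop (fun p I => Mon p I ∧ Bc p I) h L' := by
  by_contra! hlearn
  obtain ⟨s, -, e, he, rfl⟩ := (hlearn L hL).exists_ge_W_eq 0
  obtain ⟨M, hM, hsepM⟩ := hsep s
  obtain ⟨t, hst, e', he', rfl⟩ := (hlearn M hM).exists_ge_W_eq s
  obtain ⟨N, hN, hLN, hMN, hnot⟩ := hsepM t
  have hmon := ((hlearn N hN).2 _ (canonical_canonicalInformant N)
    (isInformant_canonicalInformant N)).1
  exact hnot (W_inter_subset_of_mon hst hmon hLN hMN he he')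

end Monotone

/-! ### The even numbers below the odd elements of a set -/

/-- The even numbers smaller than every odd element of `A`; all even numbers if `A` has no odd
element. The dual monotone learner adds this set to its positive data. -/
def evensBelowOdds (A : Set ℕ) : Set ℕ := {x | Even x ∧ ∀ y ∈ A, Odd y → x < y}

theorem evensBelowOdds_antitone : Antitone evensBelowOdds :=
  fun _ _ hAB _ hx => ⟨hx.1, fun y hy => hx.2 y (hAB hy)⟩

theorem exists_finite_evensBelowOdds_eq (A : Set ℕ) :
    ∃ F ⊆ A, F.Finite ∧ evensBelowOdds F = evensBelowOdds A := by
  by_cases hodd : ∃ y, y ∈ A ∧ Odd y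
  · obtain ⟨hmem, hz⟩ := Nat.find_spec hodd
    have hF : {Nat.find hodd} ⊆ A := Set.singleton_subset_iff.2 hmem
    refine ⟨_, hF, Set.finite_singleton _, Set.Subset.antisymm (fun x hx => ?_)
      (evensBelowOdds_antitone hF)⟩
    exact ⟨hx.1, fun y hy hyodd => (hx.2 _ rfl hz).trans_le (Nat.find_min' hodd ⟨hy, hyodd⟩)⟩
  · refine ⟨∅, Set.empty_subset A, Set.finite_empty, Set.Subset.antisymm (fun x hx => ?_)
      (evensBelowOdds_antitone (Set.empty_subset A))⟩
    exact ⟨hx.1, fun y hy hyodd => absurd ⟨y, hy, hyodd⟩ hodd⟩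

theorem eventually_posS_union_evensBelowOdds_eq {I : Informant}
    (hsub : evensBelowOdds (posI I) ⊆ posI I) (hfin : (posI I \ evensBelowOdds (posI I)).Finite) :
    ∀ᶠ n in atTop, posS (segment I n) ∪ evensBelowOdds (posS (segment I n)) = posI I := by
  obtain ⟨F, hFI, hF, hFeq⟩ := exists_finite_evensBelowOdds_eq (posI I)
  filter_upwards [eventually_subset_posS_segment hF hFI,
    eventually_subset_posS_segment hfin Set.sdiff_subset] with n hFn hdiff
  have hpos := posS_segment_subset_posI I n
  have heq : evensBelowOdds (posS (segment I n)) = evensBelowOdds (posI I) :=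
    Set.Subset.antisymm ((evensBelowOdds_antitone hFn).trans_eq hFeq)
      (evensBelowOdds_antitone hpos)
  rw [heq]
  refine Set.Subset.antisymm (Set.union_subset hpos hsub) ?_
  rwa [Set.union_comm, ← Set.sdiff_subset_iff]

theorem primrecPred_even : PrimrecPred fun x : ℕ => Even x :=
  (Primrec.eq.comp (Primrec.nat_mod.comp Primrec.id (Primrec.const 2)) (Primrec.const 0)).of_eq
    fun _ => Nat.even_iff.symm

theorem primrecRel_mem_posS : PrimrecRel fun (σ : Seq) (x : ℕ) => x ∈ posS σ := by
  have hdatum : PrimrecRel fun (a : Datum) (x : ℕ) => a = (x, true) :=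
    Primrec.eq.comp Primrec.fst (Primrec.snd.pair (Primrec.const true))
  exact PrimrecPred.of_eq hdatum.exists_mem_list fun ⟨σ, x⟩ => by simp [posS]

theorem primrecRel_mem_evensBelowOdds_posS :
    PrimrecRel fun (σ : Seq) (x : ℕ) => x ∈ evensBelowOdds (posS σ) := by
  have hdatum : PrimrecRel fun (a : Datum) (x : ℕ) => a.2 = false ∨ Even a.1 ∨ x < a.1 :=
    (Primrec.eq.comp (Primrec.snd.comp Primrec.fst) (Primrec.const false)).or
      ((primrecPred_even.comp (Primrec.fst.comp Primrec.fst)).or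
        (Primrec.nat_lt.comp Primrec.snd (Primrec.fst.comp Primrec.fst)))
  refine ((primrecPred_even.comp Primrec.snd).and hdatum.forall_mem_list).of_eq fun ⟨σ, x⟩ => ?_
  simp [evensBelowOdds, posS, imp_iff_not_or]

theorem rePred_mem_posS_union_evensBelowOdds :
    REPred fun p : Seq × ℕ => p.2 ∈ posS p.1 ∪ evensBelowOdds (posS p.1) :=
  (primrecRel_mem_posS.or primrecRel_mem_evensBelowOdds_posS).computablePred.to_re

/-! ### The witness class -/

theorem mem_X12 {x : ℕ} : x ∈ X12 ↔ Even x :=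
  even_iff_exists_two_mul.symm

theorem mem_Y12 {n x : ℕ} : x ∈ Y12 n ↔ x = 2 * n + 1 ∨ Even x ∧ x ≤ 2 * n := by
  refine or_congr_right ⟨?_, ?_⟩
  · rintro ⟨i, hi, rfl⟩
    exact ⟨even_two_mul i, by omega⟩
  · rintro ⟨heven, hx⟩
    obtain ⟨i, rfl⟩ := even_iff_exists_two_mul.1 heven
    exact ⟨i, by omega, rfl⟩

theorem mem_Z12 {n m x : ℕ} : x ∈ Z12 n m ↔ x = 2 * m ∨ x ∈ Y12 n :=
  Iff.rfl

theorem X12_mem_class12 : X12 ∈ class12 :=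
  Or.inl (Or.inl rfl)

theorem Y12_mem_class12 (n : ℕ) : Y12 n ∈ class12 :=
  Or.inl (Or.inr ⟨n, rfl⟩)

theorem Z12_mem_class12 {n m : ℕ} (hnm : n < m) : Z12 n m ∈ class12 :=
  Or.inr ⟨n, m, hnm, rfl⟩

theorem evensBelowOdds_X12 : evensBelowOdds X12 = X12 := by
  ext x
  refine ⟨fun hx => mem_X12.2 hx.1, fun hx => ⟨mem_X12.1 hx, fun y hy hyodd => ?_⟩⟩
  exact absurd (mem_X12.1 hy) (Nat.not_even_iff_odd.2 hyodd)

theorem evensBelowOdds_subset_of_Y12_subset {n : ℕ} {L : Set ℕ} (hL : Y12 n ⊆ L) :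
    evensBelowOdds L ⊆ L := by
  rintro x ⟨heven, hlt⟩
  have hx : x < 2 * n + 1 := hlt _ (hL (Set.mem_insert _ _)) (odd_two_mul_add_one n)
  exact hL (mem_Y12.2 (Or.inr ⟨heven, Nat.le_of_lt_succ hx⟩))

theorem Y12_finite (n : ℕ) : (Y12 n).Finite :=
  (Set.finite_Iic (2 * n + 1)).subset fun x hx => by
    rw [mem_Y12] at hx
    rw [Set.mem_Iic]
    omega

theorem evensBelowOdds_subset_and_finite_diff_of_mem_class12 {L : Set ℕ} (hL : L ∈ class12) :
    evensBelowOdds L ⊆ L ∧ (L \ evensBelowOdds L).Finite := by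
  rcases hL with (rfl | ⟨n, rfl⟩) | ⟨n, m, -, rfl⟩
  · simp [evensBelowOdds_X12]
  · exact ⟨evensBelowOdds_subset_of_Y12_subset subset_rfl, (Y12_finite n).sdiff⟩
  · exact ⟨evensBelowOdds_subset_of_Y12_subset (Set.subset_insert _ _),
      ((Y12_finite n).insert _).sdiff⟩

theorem class12_mem_learnable_mond_bc :
    class12 ∈ Learnable TT TotalL AllI Gop (fun p I => Mond p I ∧ Bc p I) := by
  refine mem_learnable_mond_bc rePred_mem_posS_union_evensBelowOdds
    (fun σ τ hστ => evensBelowOdds_antitone (posS_mono hστ)) fun L hL I hI => ?_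
  obtain ⟨rfl, -⟩ := hI
  obtain ⟨hsub, hfin⟩ := evensBelowOdds_subset_and_finite_diff_of_mem_class12 hL
  exact eventually_posS_union_evensBelowOdds_eq hsub hfin

theorem mem_X12_iff_mem_Z12 {n m x : ℕ} (hx : x ≤ 2 * n) : x ∈ X12 ↔ x ∈ Z12 n m := by
  rw [mem_X12, mem_Z12, mem_Y12]
  grind

theorem mem_Y12_iff_mem_Z12 {n m x : ℕ} (hx : x ≠ 2 * m) : x ∈ Y12 n ↔ x ∈ Z12 n m :=
  (or_iff_right hx).symm

theorem not_X12_inter_Z12_subset_Y12 {n m : ℕ} (hnm : n < m) : ¬ X12 ∩ Z12 n m ⊆ Y12 n := by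
  intro hsub
  have hmem : 2 * m ∈ Y12 n := hsub ⟨⟨m, rfl⟩, mem_Z12.2 (Or.inl rfl)⟩
  rw [mem_Y12] at hmem
  omega

theorem exists_mem_class12_not_learnsWith_mon_bc (h : Learner) :
    ∃ L ∈ class12, ¬ LearnsWith Canonical Gop (fun p I => Mon p I ∧ Bc p I) h L := by
  refine exists_not_learnsWith_mon_bc X12_mem_class12
    (fun k => ⟨Y12 k, Y12_mem_class12 k, fun t => ?_⟩) h
  have hk : k < t + k + 1 := by omega
  exact ⟨Z12 k (t + k + 1), Z12_mem_class12 hk, fun _ hx => mem_X12_iff_mem_Z12 (by omega),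
    fun _ hx => mem_Y12_iff_mem_Z12 (by omega), not_X12_inter_Z12_subset_Y12 hk⟩

theorem dual_mon_minus_mon_general :
    class12 ∈ Learnable TT TotalL AllI Gop (fun p I => Mond p I ∧ Bc p I) ∧
      ∀ h : Learner, ∃ L ∈ class12,
        ¬ LearnsWith Canonical Gop (fun p I => Mon p I ∧ Bc p I) h L :=
  ⟨class12_mem_learnable_mond_bc, exists_mem_class12_not_learnsWith_mon_bc⟩

/-- `class12` witnesses
`[Inf G Mon^d Bc] \ [Inf G Mon Bc] ≠ ∅`. -/
theorem dual_mon_minus_mon :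
    class12 ∈
      Learnable TT AllL AllI Gop (fun p I => Mond p I ∧ Bc p I) \
        Learnable TT AllL AllI Gop (fun p I => Mon p I ∧ Bc p I) := by
  refine ⟨Learnable.mono_learners (fun _ _ => trivial) dual_mon_minus_mon_general.1, ?_⟩
  rintro ⟨h, -, -, -, hlearn⟩
  obtain ⟨L, hL, hnot⟩ := dual_mon_minus_mon_general.2 h
  exact hnot ((hlearn L hL).of_forall_imp fun _ _ => trivial)

end InfBc
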